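/- arXiv:math/9209218 — 2 statements merged into one kernel-verified Lean document; each statement's English description precedes it below -/
import Mathlib

section
/- Suppose n, l, k are natural numbers with n ≥ 2 and l ≥ 2, and ε is a real number with 0 < ε ≤ 1/2 and l·ε^k ≥ (k+2)·ln n. Then there is a set W ⊆ n × n (identifying n with {0,…,n−1}) such that #(W) ≤ ε·n² and whenever I ⊆ n with #(I) = l and J_0,…,J_{l−1} ⊆ n are pairwise disjoint sets each of cardinality at most k, there are i ∈ I and j < l such that {i} × J_j ⊆ W. -/
/-!
Put each point of `n × n` into `W` independently with probability `p = ε (1 - 1/n²)`. For fixed `I`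
and pairwise disjoint nonempty `J_j`, the `l²` sets `{i} × J_j` are pairwise disjoint, so the
probability that `W` contains none of them is at most `(1 - p ^ k) ^ (l²) ≤ exp (-l² p ^ k)`. There
are at most `n ^ l * n ^ (k l)` such pairs `(I, J)`, and the hypothesis on `l * ε ^ k` makes the
probability that some pair fails less than `1/n²`. The expected size of `W` is
`p n² = ε n² (1 - 1/n²)`, so some `W` for which no pair fails has at most `ε n²` elements.
-/

open Finset

section RandomSubset

variable {α : Type*} [Fintype α] [DecidableEq α] {p : ℝ}

/-- The probability that the random subset of `α` containing each point independently with
probability `p` equals `W`. The probability of a family of sets is written as the sum of the weights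
of its members. -/
def bernoulliWeight (p : ℝ) (W : Finset α) : ℝ :=
  p ^ #W * (1 - p) ^ #Wᶜ

lemma bernoulliWeight_nonneg (hp₀ : 0 ≤ p) (hp₁ : p ≤ 1) (W : Finset α) :
    0 ≤ bernoulliWeight p W :=
  mul_nonneg (pow_nonneg hp₀ _) (pow_nonneg (sub_nonneg.2 hp₁) _)

lemma sum_bernoulliWeight_filter_subset (p : ℝ) (B : Finset α) :
    ∑ W with B ⊆ W, bernoulliWeight p W = p ^ #B := by
  have supersets_eq : ({W | B ⊆ W} : Finset (Finset α)) = Bᶜ.powerset.image (B ∪ ·) := by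
    rw [compl_eq_univ_sdiff, ← Icc_eq_image_powerset (subset_univ B)]
    ext W
    simp
  have disjoint_of_mem {U : Finset α} (hU : U ∈ Bᶜ.powerset) : Disjoint B U :=
    subset_compl_iff_disjoint_left.1 (mem_powerset.1 hU)
  have union_injOn : Set.InjOn (B ∪ ·) (Bᶜ.powerset : Set (Finset α)) := fun U hU V hV hUV ↦ by
    simpa [union_sdiff_cancel_left, disjoint_of_mem hU, disjoint_of_mem hV] using
      congrArg (· \ B) hUV
  calc ∑ W with B ⊆ W, bernoulliWeight p W
      = ∑ U ∈ Bᶜ.powerset, bernoulliWeight p (B ∪ U) := by rw [supersets_eq, sum_image union_injOn]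
    _ = ∑ U ∈ Bᶜ.powerset, p ^ #B * (p ^ #U * (1 - p) ^ (#Bᶜ - #U)) := by
        refine sum_congr rfl fun U hU ↦ ?_
        have hcompl : #(B ∪ U)ᶜ = #Bᶜ - #U := by
          rw [compl_union, ← sdiff_eq_inter_compl, card_sdiff_of_subset (mem_powerset.1 hU)]
        rw [bernoulliWeight, card_union_of_disjoint (disjoint_of_mem hU), hcompl, pow_add,
          mul_assoc]
    _ = p ^ #B := by rw [← mul_sum, sum_pow_mul_eq_add_pow, add_sub_cancel, one_pow, mul_one]

lemma sum_bernoulliWeight (p : ℝ) : ∑ W : Finset α, bernoulliWeight p W = 1 := by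
  simpa using sum_bernoulliWeight_filter_subset p (∅ : Finset α)

lemma sum_bernoulliWeight_mul_card (p : ℝ) :
    ∑ W : Finset α, bernoulliWeight p W * #W = p * Fintype.card α :=
  calc ∑ W : Finset α, bernoulliWeight p W * #W
      = ∑ W : Finset α, ∑ a : α, if {a} ⊆ W then bernoulliWeight p W else 0 := by
        simp [mul_comm]
    _ = ∑ a : α, ∑ W with {a} ⊆ W, bernoulliWeight p W := by
        simp only [sum_filter]
        exact sum_comm
    _ = p * Fintype.card α := by
        simp only [sum_bernoulliWeight_filter_subset, card_singleton, pow_one, sum_const, card_univ,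
          nsmul_eq_mul, mul_comm]

lemma sum_bernoulliWeight_filter_forall_not_subset {τ : Type*} (p : ℝ) (T : Finset τ)
    {A : τ → Finset α} (hA : (T : Set τ).PairwiseDisjoint A) :
    ∑ W with ∀ t ∈ T, ¬A t ⊆ W, bernoulliWeight p W = ∏ t ∈ T, (1 - p ^ #(A t)) := by
  classical
  let supersets (t : τ) : Finset (Finset α) := {W | A t ⊆ W}
  have avoiding_eq : ({W | ∀ t ∈ T, ¬A t ⊆ W} : Finset (Finset α)) =
      T.inf fun t ↦ (supersets t)ᶜ := by
    ext W
    simp [supersets, mem_inf]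
  have inf_supersets_eq (U : Finset τ) :
      U.inf supersets = ({W | U.biUnion A ⊆ W} : Finset (Finset α)) := by
    ext W
    simp [supersets, mem_inf]
  rw [avoiding_eq, inclusion_exclusion_sum_inf_compl, prod_sub]
  refine sum_congr rfl fun U hU ↦ ?_
  have hcard : #(U.biUnion A) = ∑ t ∈ U, #(A t) :=
    card_biUnion (hA.subset (mod_cast mem_powerset.1 hU))
  rw [inf_supersets_eq, sum_bernoulliWeight_filter_subset, hcard, prod_const_one, mul_one,
    prod_pow_eq_pow_sum, zsmul_eq_mul]
  push_cast
  rfl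

lemma exists_notMem_card_le_of_sum_bernoulliWeight_lt (hp₀ : 0 ≤ p) (hp₁ : p ≤ 1)
    {𝓑 : Finset (Finset α)} {M : ℝ}
    (h : p * Fintype.card α < M * (1 - ∑ W ∈ 𝓑, bernoulliWeight p W)) :
    ∃ W ∉ 𝓑, (#W : ℝ) ≤ M := by
  by_contra! hlarge
  refine h.not_ge ?_
  calc M * (1 - ∑ W ∈ 𝓑, bernoulliWeight p W)
      = ∑ W ∈ 𝓑ᶜ, bernoulliWeight p W * M := by
        rw [← sum_bernoulliWeight (α := α) p, ← sum_compl_add_sum 𝓑, add_sub_cancel_right, mul_comm,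
          sum_mul]
    _ ≤ ∑ W ∈ 𝓑ᶜ, bernoulliWeight p W * #W :=
        sum_le_sum fun W hW ↦ mul_le_mul_of_nonneg_left (hlarge W (mem_compl.1 hW)).le
          (bernoulliWeight_nonneg hp₀ hp₁ W)
    _ ≤ ∑ W, bernoulliWeight p W * #W :=
        sum_le_univ_sum_of_nonneg fun W ↦
          mul_nonneg (bernoulliWeight_nonneg hp₀ hp₁ W) (#W).cast_nonneg
    _ = p * Fintype.card α := sum_bernoulliWeight_mul_card p

end RandomSubset

section Counting

lemma sum_biUnion_le_sum_of_nonneg {ι α M : Type*} [DecidableEq α] [AddCommMonoid M]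
    [PartialOrder M] [IsOrderedAddMonoid M] {f : α → M} (hf : ∀ a, 0 ≤ f a) (s : Finset ι)
    (t : ι → Finset α) :
    ∑ a ∈ s.biUnion t, f a ≤ ∑ i ∈ s, ∑ a ∈ t i, f a := by
  classical
  induction s using Finset.induction_on with
  | empty => simp
  | insert i s hi ih =>
    calc ∑ a ∈ (insert i s).biUnion t, f a
        ≤ ∑ a ∈ t i ∪ s.biUnion t, f a + ∑ a ∈ t i ∩ s.biUnion t, f a := by
          rw [biUnion_insert]
          exact le_add_of_nonneg_right (sum_nonneg fun a _ ↦ hf a)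
      _ = ∑ a ∈ t i, f a + ∑ a ∈ s.biUnion t, f a := sum_union_inter
      _ ≤ ∑ i ∈ insert i s, ∑ a ∈ t i, f a := by
          rw [sum_insert hi]
          exact add_le_add_right ih _

lemma card_filter_nonempty_card_le_le_pow (β : Type*) [Fintype β] (k : ℕ) :
    #{s : Finset β | s.Nonempty ∧ #s ≤ k} ≤ Fintype.card β ^ k := by
  classical
  have exists_image_eq (s : Finset β) (hs : s.Nonempty) (hsk : #s ≤ k) :
      ∃ g : Fin k → β, univ.image g = s := by
    have := hs.to_subtype
    obtain ⟨f⟩ : Nonempty (s ↪ Fin k) := Function.Embedding.nonempty_of_card_le (by simpa using hsk)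
    refine ⟨fun x ↦ (Function.invFun f x : s), ?_⟩
    rw [← Function.comp_def, ← image_image, image_univ_of_surjective
      (Function.invFun_surjective f.injective)]
    simp
  calc #{s : Finset β | s.Nonempty ∧ #s ≤ k}
      ≤ #(univ.image fun g : Fin k → β ↦ univ.image g) := by
        refine card_le_card fun s hs ↦ ?_
        obtain ⟨hs, hsk⟩ := (mem_filter.1 hs).2
        simpa using exists_image_eq s hs hsk
    _ ≤ Fintype.card β ^ k := card_image_le.trans_eq (by simp)

variable {α β ι : Type*} [Fintype α] [Fintype β] [DecidableEq β] [Fintype ι] [DecidableEq ι]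
  {k l : ℕ}

variable (α β ι k l) in
/-- The pairs `(I, J)` over which the union bound runs: `#I = l`, and the `J j` are pairwise
disjoint of size at most `k`. Empty `J j` are left out, since `{i} × ∅` lies in every set and there
are at most `|β| ^ k` nonempty sets of size at most `k`. -/
def disjointConfigurations : Finset (Finset α × (ι → Finset β)) :=
  {c | #c.1 = l ∧ (∀ j, (c.2 j).Nonempty ∧ #(c.2 j) ≤ k) ∧
    ∀ j j', j ≠ j' → Disjoint (c.2 j) (c.2 j')}

lemma card_disjointConfigurations_le :
    #(disjointConfigurations α β ι k l) ≤
      Fintype.card α ^ l * Fintype.card β ^ (k * Fintype.card ι) := by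
  have subset_product : disjointConfigurations α β ι k l ⊆
      powersetCard l univ ×ˢ Fintype.piFinset fun _ ↦ {s | s.Nonempty ∧ #s ≤ k} := by
    intro c hc
    obtain ⟨hI, hJ, -⟩ := (mem_filter.1 hc).2
    simpa [hI] using hJ
  refine (card_le_card subset_product).trans ?_
  rw [card_product, card_powersetCard, card_univ, Fintype.card_piFinset, prod_const, card_univ,
    pow_mul]
  exact Nat.mul_le_mul (Nat.choose_le_pow _ _)
    (Nat.pow_le_pow_left (card_filter_nonempty_card_le_le_pow β k) _)

end Counting

section Fibers

/-- The property wanted of `W`: it contains a set `{i} × J j` with `i ∈ I`, whenever `#I = l` and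
the `J j` are pairwise disjoint of size at most `k`. -/
def ContainsFibers {α β : Type*} (ι : Type*) (k l : ℕ) (W : Finset (α × β)) : Prop :=
  ∀ I : Finset α, #I = l → ∀ J : ι → Finset β, (∀ j, #(J j) ≤ k) →
    (∀ j j', j ≠ j' → Disjoint (J j) (J j')) → ∃ i ∈ I, ∃ j, ∀ a ∈ J j, (i, a) ∈ W

variable {α β ι : Type*} [Fintype α] [DecidableEq α] [Fintype β] [DecidableEq β] [Fintype ι]
  {p : ℝ} {k l : ℕ}

/-- The family of sets `W` containing no `{i} × J j` with `i ∈ I`: those that fail for `(I, J)`. -/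
def fiberAvoidingSets (I : Finset α) (J : ι → Finset β) : Finset (Finset (α × β)) :=
  {W | ∀ t ∈ I ×ˢ (univ : Finset ι), ¬{t.1} ×ˢ J t.2 ⊆ W}

lemma sum_bernoulliWeight_fiberAvoidingSets_le (hp₀ : 0 ≤ p) (hp₁ : p ≤ 1) (I : Finset α)
    {J : ι → Finset β} (hJk : ∀ j, #(J j) ≤ k) (hJ : ∀ j j', j ≠ j' → Disjoint (J j) (J j')) :
    ∑ W ∈ fiberAvoidingSets I J, bernoulliWeight p W ≤
      Real.exp (-(#I * Fintype.card ι * p ^ k)) := by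
  have fibers_disjoint : ((I ×ˢ univ : Finset (α × ι)) : Set (α × ι)).PairwiseDisjoint
      fun t ↦ {t.1} ×ˢ J t.2 := by
    rintro ⟨i, j⟩ - ⟨i', j'⟩ - hne
    refine disjoint_product.2 ?_
    rcases eq_or_ne i i' with rfl | hi
    · exact .inr (hJ j j' fun hj ↦ hne (by rw [hj]))
    · exact .inl (disjoint_singleton.2 hi)
  have factor_le (t : α × ι) : 1 - p ^ #({t.1} ×ˢ J t.2) ≤ Real.exp (-p ^ k) := by
    have hpow : p ^ k ≤ p ^ #({t.1} ×ˢ J t.2) :=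
      pow_le_pow_of_le_one hp₀ hp₁ (by simpa using hJk t.2)
    linarith [Real.one_sub_le_exp_neg (p ^ k)]
  calc ∑ W ∈ fiberAvoidingSets I J, bernoulliWeight p W
      = ∏ t ∈ I ×ˢ univ, (1 - p ^ #({t.1} ×ˢ J t.2)) :=
        sum_bernoulliWeight_filter_forall_not_subset p _ fibers_disjoint
    _ ≤ ∏ _t ∈ I ×ˢ (univ : Finset ι), Real.exp (-p ^ k) :=
        prod_le_prod (fun t _ ↦ sub_nonneg.2 (pow_le_one₀ hp₀ hp₁)) fun t _ ↦ factor_le t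
    _ = Real.exp (-(#I * Fintype.card ι * p ^ k)) := by
        rw [prod_const, ← Real.exp_nat_mul, card_product, card_univ]
        push_cast
        ring_nf

lemma sum_bernoulliWeight_biUnion_fiberAvoidingSets_le [DecidableEq ι] (hp₀ : 0 ≤ p) (hp₁ : p ≤ 1) :
    ∑ W ∈ (disjointConfigurations α β ι k l).biUnion fun c ↦ fiberAvoidingSets c.1 c.2,
        bernoulliWeight p W ≤
      Fintype.card α ^ l * Fintype.card β ^ (k * Fintype.card ι) *
        Real.exp (-(l * Fintype.card ι * p ^ k)) := by
  have failure_le (c) (hc : c ∈ disjointConfigurations α β ι k l) :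
      ∑ W ∈ fiberAvoidingSets c.1 c.2, bernoulliWeight p W ≤
        Real.exp (-(l * Fintype.card ι * p ^ k)) := by
    obtain ⟨hI, hJk, hJ⟩ := (mem_filter.1 hc).2
    exact hI ▸ sum_bernoulliWeight_fiberAvoidingSets_le hp₀ hp₁ c.1 (fun j ↦ (hJk j).2) hJ
  refine (sum_biUnion_le_sum_of_nonneg (bernoulliWeight_nonneg hp₀ hp₁) _ _).trans ?_
  refine (sum_le_card_nsmul _ _ _ failure_le).trans ?_
  rw [nsmul_eq_mul]
  exact mul_le_mul_of_nonneg_right (mod_cast card_disjointConfigurations_le) (Real.exp_pos _).le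

end Fibers

theorem exists_card_le_containsFibers {α β ι : Type*} [Fintype α] [Fintype β] [Fintype ι]
    {p M : ℝ} {k l : ℕ} (hp₀ : 0 ≤ p) (hp₁ : p ≤ 1) (hl : l ≠ 0) (hM : 0 ≤ M)
    (h : p * (Fintype.card α * Fintype.card β) <
      M * (1 - Fintype.card α ^ l * Fintype.card β ^ (k * Fintype.card ι) *
        Real.exp (-(l * Fintype.card ι * p ^ k)))) :
    ∃ W : Finset (α × β), (#W : ℝ) ≤ M ∧ ContainsFibers ι k l W := by
  classical
  have expectation_lt := h.trans_le <| mul_le_mul_of_nonneg_left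
    (sub_le_sub_left (sum_bernoulliWeight_biUnion_fiberAvoidingSets_le hp₀ hp₁) 1) hM
  rw [← Nat.cast_mul, ← Fintype.card_prod] at expectation_lt
  obtain ⟨W, hW, hWM⟩ := exists_notMem_card_le_of_sum_bernoulliWeight_lt hp₀ hp₁ expectation_lt
  refine ⟨W, hWM, fun I hI J hJk hJ ↦ ?_⟩
  by_contra! havoid
  have J_nonempty (j : ι) : (J j).Nonempty := by
    obtain ⟨i, hi⟩ : I.Nonempty := card_ne_zero.1 (hI ▸ hl)
    obtain ⟨a, ha, -⟩ := havoid i hi j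
    exact ⟨a, ha⟩
  refine hW (mem_biUnion.2 ⟨(I, J), ?_, ?_⟩)
  · simpa [disjointConfigurations] using ⟨hI, fun j ↦ ⟨J_nonempty j, hJk j⟩, hJ⟩
  · simpa [fiberAvoidingSets, not_subset] using fun i j hi ↦ havoid i hi j

section Estimates

variable {n l k : ℕ} {ε : ℝ}

lemma ne_zero_of_mul_log_le (hn : 2 ≤ n) (hlk : ((k : ℝ) + 2) * Real.log n ≤ l * ε ^ k) :
    l ≠ 0 := by
  rintro rfl
  have log_pos : 0 < Real.log n := Real.log_pos (mod_cast hn)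
  exact hlk.not_gt (by simpa using by positivity)

lemma add_two_lt_of_mul_log_le (hn : 2 ≤ n) (hln : l ≤ n) (hk : 1 ≤ k)
    (h : (k + 2) * Real.log n ≤ l) : k + 2 < l := by
  have hk' : (1 : ℝ) ≤ k := mod_cast hk
  have hln' : (l : ℝ) ≤ n := mod_cast hln
  have three_le : 3 ≤ n := by
    refine Nat.succ_le_of_lt (hn.lt_of_ne ?_)
    rintro rfl
    push_cast at h hln'
    nlinarith [Real.log_two_gt_d9]
  have one_lt_log : 1 < Real.log n := by
    have hn' : (3 : ℝ) ≤ n := mod_cast three_le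
    exact (Real.lt_log_iff_exp_lt (by positivity)).2 (Real.exp_one_lt_three.trans_le hn')
  have : (k + 2 : ℝ) < l := by nlinarith
  exact_mod_cast this

lemma two_lt_mul_one_sub_div_sq (hln : l ≤ n) (hkl : k + 2 < l) :
    2 < l * (1 - k * (k + 2) / (n : ℝ) ^ 2) := by
  have hln' : (l : ℝ) ≤ n := mod_cast hln
  have hkl' : (k + 2 : ℝ) < l := mod_cast hkl
  have hn : (0 : ℝ) < n := by linarith [k.cast_nonneg (α := ℝ)]
  have loss_le : l * (k * (k + 2) / (n : ℝ) ^ 2) ≤ k := by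
    rw [← mul_div_assoc, div_le_iff₀ (by positivity)]
    calc (l : ℝ) * (k * (k + 2)) = k * (l * (k + 2)) := by ring
      _ ≤ k * (n * n) := by gcongr; linarith
      _ = k * (n : ℝ) ^ 2 := by ring
  linarith

lemma pow_mul_one_sub_le_mul_one_sub_pow {δ : ℝ} (hε : 0 ≤ ε) (hδ : δ ≤ 2) :
    ε ^ k * (1 - k * δ) ≤ (ε * (1 - δ)) ^ k := by
  have bernoulli : 1 - k * δ ≤ (1 - δ) ^ k := by
    simpa [sub_eq_add_neg] using one_add_mul_le_pow (a := -δ) (by linarith) k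
  rw [mul_pow]
  exact mul_le_mul_of_nonneg_left bernoulli (pow_nonneg hε k)

lemma mul_log_lt_mul_pow (hn : 2 ≤ n) (hln : l ≤ n) (hk : 1 ≤ k) (hε₀ : 0 ≤ ε) (hε₁ : ε ≤ 1)
    (hlk : ((k : ℝ) + 2) * Real.log n ≤ l * ε ^ k) :
    (l + k * l + 2) * Real.log n < l * l * (ε * (1 - 1 / (n : ℝ) ^ 2)) ^ k := by
  have hn₁ : (1 : ℝ) < n := mod_cast hn
  have hkl : k + 2 < l := add_two_lt_of_mul_log_le hn hln hk
    (hlk.trans (mul_le_of_le_one_right l.cast_nonneg (pow_le_one₀ hε₀ hε₁)))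
  have one_sub_nonneg : 0 ≤ 1 - k * (1 / (n : ℝ) ^ 2) := by
    have hkn : (k : ℝ) ≤ n := mod_cast (by lia : k ≤ n)
    rw [sub_nonneg, mul_one_div]
    exact div_le_one_of_le₀ (hkn.trans (le_self_pow₀ hn₁.le two_ne_zero)) (by positivity)
  calc (l + k * l + 2) * Real.log n
      < (l + k * l + l * (1 - k * (k + 2) / (n : ℝ) ^ 2)) * Real.log n :=
        mul_lt_mul_of_pos_right (by linarith [two_lt_mul_one_sub_div_sq hln hkl])
          (Real.log_pos hn₁)
    _ = l * ((k + 2) * Real.log n * (1 - k * (1 / (n : ℝ) ^ 2))) := by ring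
    _ ≤ l * (l * ε ^ k * (1 - k * (1 / (n : ℝ) ^ 2))) := by gcongr
    _ = l * l * (ε ^ k * (1 - k * (1 / (n : ℝ) ^ 2))) := by ring
    _ ≤ l * l * (ε * (1 - 1 / (n : ℝ) ^ 2)) ^ k := by
        gcongr
        have one_div_le_one : 1 / (n : ℝ) ^ 2 ≤ 1 :=
          div_le_one_of_le₀ (one_le_pow₀ hn₁.le) (by positivity)
        exact pow_mul_one_sub_le_mul_one_sub_pow hε₀ (one_div_le_one.trans one_le_two)

lemma pow_mul_pow_mul_exp_lt_one_div_sq (hn : 2 ≤ n) (hln : l ≤ n) (hk : 1 ≤ k) (hε₀ : 0 ≤ ε)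
    (hε₁ : ε ≤ 1) (hlk : ((k : ℝ) + 2) * Real.log n ≤ l * ε ^ k) :
    (n : ℝ) ^ l * n ^ (k * l) * Real.exp (-(l * l * (ε * (1 - 1 / (n : ℝ) ^ 2)) ^ k)) <
      1 / (n : ℝ) ^ 2 := by
  set x := l * l * (ε * (1 - 1 / (n : ℝ) ^ 2)) ^ k
  have pow_lt_exp : (n : ℝ) ^ (l + k * l + 2) < Real.exp x := by
    rw [← Real.exp_log (by positivity : (0 : ℝ) < n), ← Real.exp_nat_mul]
    push_cast
    exact Real.exp_lt_exp.2 (mul_log_lt_mul_pow hn hln hk hε₀ hε₁ hlk)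
  rw [Real.exp_neg, ← div_eq_mul_inv, div_lt_div_iff₀ (Real.exp_pos x) (by positivity), one_mul,
    ← pow_add, ← pow_add]
  exact pow_lt_exp

theorem exists_card_le_containsFibers_of_le (hn : 2 ≤ n) (hln : l ≤ n) (hk : 1 ≤ k) (hε₀ : 0 < ε)
    (hε₁ : ε ≤ 1) (hlk : ((k : ℝ) + 2) * Real.log n ≤ l * ε ^ k) :
    ∃ W : Finset (Fin n × Fin n), (#W : ℝ) ≤ ε * (n : ℝ) ^ 2 ∧ ContainsFibers (Fin l) k l W := by
  have one_sub_nonneg : 0 ≤ 1 - 1 / (n : ℝ) ^ 2 :=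
    sub_nonneg.2 (div_le_one_of_le₀ (one_le_pow₀ (mod_cast (by lia : 1 ≤ n))) (by positivity))
  refine exists_card_le_containsFibers (p := ε * (1 - 1 / (n : ℝ) ^ 2))
    (mul_nonneg hε₀.le one_sub_nonneg) (mul_le_one₀ hε₁ one_sub_nonneg (by simp))
    (ne_zero_of_mul_log_le hn hlk) (by positivity) ?_
  simp only [Fintype.card_fin]
  calc ε * (1 - 1 / (n : ℝ) ^ 2) * (n * n) = ε * (n : ℝ) ^ 2 * (1 - 1 / (n : ℝ) ^ 2) := by ring
    _ < _ := by
      gcongr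
      exact pow_mul_pow_mul_exp_lt_one_div_sq hn hln hk hε₀.le hε₁ hlk

end Estimates

theorem stmt_0_general (n l k : ℕ) (ε : ℝ) (hn : 2 ≤ n) (hε : 0 < ε)
    (hlk : ((k : ℝ) + 2) * Real.log n ≤ (l : ℝ) * ε ^ k) :
    ∃ W : Finset (Fin n × Fin n),
      (W.card : ℝ) ≤ ε * (n : ℝ) ^ 2 ∧
      ∀ I : Finset (Fin n), I.card = l →
        ∀ J : Fin l → Finset (Fin n),
          (∀ j, (J j).card ≤ k) →
          (∀ j j', j ≠ j' → Disjoint (J j) (J j')) →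
          ∃ i ∈ I, ∃ j : Fin l, ∀ a ∈ J j, (i, a) ∈ W := by
  have hl : l ≠ 0 := ne_zero_of_mul_log_le hn hlk
  have exists_mem (I : Finset (Fin n)) (hI : #I = l) : ∃ i, i ∈ I := card_ne_zero.1 (hI ▸ hl)
  rcases le_total 1 ε with hε₁ | hε₁
  · refine ⟨univ, ?_, fun I hI J _ _ ↦ ?_⟩
    · simpa [sq] using le_mul_of_one_le_left (by positivity : (0 : ℝ) ≤ n * n) hε₁
    · obtain ⟨i, hi⟩ := exists_mem I hI
      exact ⟨i, hi, ⟨0, hl.pos⟩, by simp⟩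
  rcases k.eq_zero_or_pos with rfl | hk
  · refine ⟨∅, by simpa using by positivity, fun I hI J hJ _ ↦ ?_⟩
    obtain ⟨i, hi⟩ := exists_mem I hI
    exact ⟨i, hi, ⟨0, hl.pos⟩, by simp [card_eq_zero.1 (Nat.le_zero.1 (hJ ⟨0, hl.pos⟩))]⟩
  rcases lt_or_ge n l with hnl | hln
  · refine ⟨∅, by simpa using by positivity, fun I hI ↦ ?_⟩
    exact absurd (card_le_univ I) (by simpa [hI] using hnl)
  exact exists_card_le_containsFibers_of_le hn hln hk hε hε₁ hlk

/-- **Lemma 1B.** Suppose `n, l, k` are natural numbers with `n ≥ 2`, `l ≥ 2`, and `ε` is a real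
number with `0 < ε ≤ 1/2` and `l·ε^k ≥ (k+2)·ln n`.  Then there is a set `W ⊆ n × n` such that
`#(W) ≤ ε·n²` and whenever `I ⊆ n` has `#(I) = l` and `J_0, …, J_{l-1} ⊆ n` are pairwise disjoint
sets each of cardinality at most `k`, there are `i ∈ I` and `j < l` with `{i} × J_j ⊆ W`. -/
theorem stmt_0 (n l k : ℕ) (ε : ℝ) (hn : 2 ≤ n) (hl : 2 ≤ l)
    (hε0 : 0 < ε) (hε1 : ε ≤ 1 / 2)
    (hlk : ((k : ℝ) + 2) * Real.log n ≤ (l : ℝ) * ε ^ k) :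
    ∃ W : Finset (Fin n × Fin n),
      (W.card : ℝ) ≤ ε * (n : ℝ) ^ 2 ∧
      ∀ I : Finset (Fin n), I.card = l →
        ∀ J : Fin l → Finset (Fin n),
          (∀ j, (J j).card ≤ k) →
          (∀ j j', j ≠ j' → Disjoint (J j) (J j')) →
          ∃ i ∈ I, ∃ j : Fin l, ∀ a ∈ J j, (i, a) ∈ W :=
  stmt_0_general n l k ε hn hε0 hlk
end

section
/- Assume (*). Let ⟨E_n⟩_{n∈ℕ} be a stochastically independent sequence of Lebesgue measurable subsets of [0,1] such that lim_{n→∞} μ_L E_n = 0 but ∑_{n∈ℕ} (μ_L E_n)^k = ∞ for every k ≥ 1. Then there is an ultrafilter ℱ on ℕ such that the set lim_{n→ℱ} E_n = { x : {n : x ∈ E_n} ∈ ℱ } is not Lebesgue measurable. -/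
open MeasureTheory Filter
open scoped ENNReal unitInterval

/-- The statement `(*)` (Talagrand's "Axiom L"): `[0,1]` is not the union of fewer than `𝔠`
closed Lebesgue negligible sets. -/
def StarProp : Prop :=
  ∀ 𝒞 : Set (Set ℝ), Cardinal.mk 𝒞 < Cardinal.continuum →
    (∀ C ∈ 𝒞, IsClosed C ∧ volume C = 0) → ¬ Set.Icc (0 : ℝ) 1 ⊆ ⋃₀ 𝒞

/-!
Call `A ⊆ ℕ` large if `∑ n ∈ A, w n ^ k = ∞` for all `k ≥ 1`, where `w n` is the smaller of the
measures of `E n` and its complement. If `A` is large, then `A ∩ {n | x ∈ E n}` is large for almost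
every `x`: the variables `w n ^ k * 1_{E n}`, `n ∈ A`, are independent and bounded, and their means
dominate the divergent series `∑ n ∈ A, w n ^ (k + 1)`. The same holds for the complements of the
`E n`.

After shrinking a closed set `K` of positive measure so that all `E n` become relatively open in it,
the exceptional points of `K` form a countable union of closed null sets. By `(*)`, which passes
from `[0,1]` to `K` along the distribution function of `K`, some point of `K` is therefore good for
fewer than `𝔠` many large sets simultaneously. There are only `𝔠` closed sets, so a transfinite
recursion picks in every closed `K` of positive measure a point `x` and a point `y` such that all
the sets `{n | x ∈ E n}` and `{n | y ∉ E n}` have large, hence nonempty, finite intersections. For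
an ultrafilter containing them, the limit set and its complement meet every closed set of positive
measure, which no measurable set does.
-/

universe u

open ProbabilityTheory Topology
open scoped Cardinal NNReal

section RelativeStarProp

/-- The relative form of `StarProp` for a measure on a topological space: no closed set of nonzero
measure is covered by fewer than `𝔠` closed null sets. -/
def RelativeStarProp {X : Type u} [TopologicalSpace X] [MeasurableSpace X] (μ : Measure X) : Prop :=
  ∀ ⦃K : Set X⦄, IsClosed K → μ K ≠ 0 → ∀ ⦃𝒞 : Set (Set X)⦄, #𝒞 < 𝔠 →
    (∀ C ∈ 𝒞, IsClosed C ∧ μ C = 0) → ¬ K ⊆ ⋃₀ 𝒞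

theorem RelativeStarProp.exists_forall_notMem {X J : Type u} [TopologicalSpace X]
    [MeasurableSpace X] {μ : Measure X} (hμ : RelativeStarProp μ) {K : Set X} (hK : IsClosed K)
    (hK₀ : μ K ≠ 0) (hJ : #J < 𝔠) {C : J → Set X} (hC : ∀ j, IsClosed (C j))
    (hC₀ : ∀ j, μ (C j) = 0) : ∃ x ∈ K, ∀ j, x ∉ C j := by
  have hcover : ¬ K ⊆ ⋃₀ Set.range C :=
    hμ hK hK₀ (Cardinal.mk_range_le.trans_lt hJ) (Set.forall_mem_range.2 fun j ↦ ⟨hC j, hC₀ j⟩)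
  simpa [Set.not_subset] using hcover

theorem lipschitzWith_measureReal_inter_Iic {K : Set ℝ} (hK : volume K ≠ ∞) :
    LipschitzWith 1 fun x ↦ volume.real (K ∩ Set.Iic x) := by
  refine LipschitzWith.of_le_add fun x y ↦ ?_
  have hsub : K ∩ Set.Iic x ⊆ (K ∩ Set.Iic y) ∪ Set.Ioc y x := fun z hz ↦
    (le_or_gt z y).imp (fun h ↦ ⟨hz.1, h⟩) fun h ↦ ⟨h, hz.2⟩
  calc volume.real (K ∩ Set.Iic x)
      ≤ volume.real ((K ∩ Set.Iic y) ∪ Set.Ioc y x) :=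
        measureReal_mono hsub <| measure_union_ne_top
          (measure_ne_top_of_subset Set.inter_subset_left hK) (by simp)
    _ ≤ volume.real (K ∩ Set.Iic y) + volume.real (Set.Ioc y x) := measureReal_union_le _ _
    _ ≤ volume.real (K ∩ Set.Iic y) + dist x y := by
        gcongr
        rw [Real.volume_real_Ioc]
        exact max_le (le_abs_self (x - y)) dist_nonneg

theorem Icc_subset_image_measureReal_inter_Iic {K : Set ℝ} (hK : IsCompact K)
    (hK₀ : volume K ≠ 0) :
    Set.Icc 0 (volume.real K) ⊆ (fun x ↦ volume.real (K ∩ Set.Iic x)) '' K := by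
  have hKfin : volume K ≠ ∞ := hK.measure_lt_top.ne
  have hpos : 0 < volume.real K := ENNReal.toReal_pos hK₀ hKfin
  set f : ℝ → ℝ := fun x ↦ volume.real (K ∩ Set.Iic x)
  have hf : Continuous f := (lipschitzWith_measureReal_inter_Iic hKfin).continuous
  suffices hIoc : Set.Ioc 0 (volume.real K) ⊆ f '' K by
    rw [← closure_Ioc hpos.ne]
    exact closure_minimal hIoc (hK.image hf).isClosed
  intro t ht
  obtain ⟨a, ha⟩ := hK.bddBelow
  obtain ⟨b, hb⟩ := hK.bddAbove
  have hfa : f (a - 1) = 0 := by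
    have hempty : K ∩ Set.Iic (a - 1) = ∅ :=
      Set.eq_empty_of_forall_notMem fun z hz ↦ by linarith [ha hz.1, Set.mem_Iic.1 hz.2]
    simp [f, hempty]
  have hfb : f b = volume.real K := by
    simp only [f, Set.inter_eq_left.2 (show K ⊆ Set.Iic b from hb)]
  obtain ⟨x, rfl⟩ : t ∈ Set.range f :=
    mem_range_of_exists_le_of_exists_ge hf ⟨a - 1, hfa ▸ ht.1.le⟩ ⟨b, hfb ▸ ht.2⟩
  -- `f` takes the same value at `x` and at the last point of `K` before `x`.
  have hne : (K ∩ Set.Iic x).Nonempty := Set.nonempty_iff_ne_empty.2 fun h ↦ by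
    simp [f, h] at ht
  obtain ⟨y, ⟨hyK, hyx⟩, hy⟩ := (hK.inter_right isClosed_Iic).exists_isGreatest hne
  have hsame : K ∩ Set.Iic y = K ∩ Set.Iic x :=
    Set.Subset.antisymm (Set.inter_subset_inter_right _ (Set.Iic_subset_Iic.2 hyx))
      fun z hz ↦ ⟨hz.1, hy hz⟩
  exact ⟨y, hyK, by simp only [f, hsame]⟩

theorem volume_image_eq_zero_of_lipschitzWith {c : ℝ≥0} {f : ℝ → ℝ} (hf : LipschitzWith c f)
    {s : Set ℝ} (hs : volume s = 0) : volume (f '' s) = 0 := by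
  simpa [hausdorffMeasure_real, hs] using hf.hausdorffMeasure_image_le zero_le_one s

namespace StarProp

/-- The distribution function of `K` is Lipschitz and maps `K` onto an interval, so it transports a
cover of `K` to a cover of `[0, 1]` by closed null sets. -/
theorem not_subset_sUnion (hstar : StarProp) {K : Set ℝ} (hK : IsCompact K) (hK₀ : volume K ≠ 0)
    {𝒞 : Set (Set ℝ)} (h𝒞 : #𝒞 < 𝔠) (hnull : ∀ C ∈ 𝒞, IsClosed C ∧ volume C = 0) :
    ¬ K ⊆ ⋃₀ 𝒞 := by
  intro hcover
  have hKfin : volume K ≠ ∞ := hK.measure_lt_top.ne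
  set m : ℝ := volume.real K
  have hm : 0 < m := ENNReal.toReal_pos hK₀ hKfin
  set f : ℝ → ℝ := fun x ↦ volume.real (K ∩ Set.Iic x)
  have hf : LipschitzWith 1 f := lipschitzWith_measureReal_inter_Iic hKfin
  refine hstar ((fun C ↦ (m * ·) ⁻¹' (f '' (K ∩ C))) '' 𝒞) (Cardinal.mk_image_le.trans_lt h𝒞)
    (Set.forall_mem_image.2 fun C hC ↦ ⟨?_, ?_⟩) fun t ht ↦ ?_
  · exact ((hK.inter_right (hnull C hC).1).image hf.continuous).isClosed.preimage
      (continuous_const_mul m)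
  · have hfC : volume (f '' (K ∩ C)) = 0 :=
      volume_image_eq_zero_of_lipschitzWith hf (measure_inter_null_of_null_right K (hnull C hC).2)
    rw [Real.volume_preimage_mul_left hm.ne', hfC, mul_zero]
  · obtain ⟨x, hxK, hxt⟩ := Icc_subset_image_measureReal_inter_Iic hK hK₀
      ⟨mul_nonneg hm.le ht.1, mul_le_of_le_one_right hm.le ht.2⟩
    obtain ⟨C, hC, hxC⟩ := hcover hxK
    exact ⟨_, Set.mem_image_of_mem _ hC, x, ⟨hxK, hxC⟩, hxt⟩

theorem relativeStarProp_unitInterval (hstar : StarProp) :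
    RelativeStarProp (volume : Measure I) := by
  intro K hK hK₀ 𝒞 h𝒞 hnull hcover
  refine hstar.not_subset_sUnion (K := Subtype.val '' K) (𝒞 := (Subtype.val '' ·) '' 𝒞)
    (hK.isCompact.image continuous_subtype_val) ?_ (Cardinal.mk_image_le.trans_lt h𝒞)
    (Set.forall_mem_image.2 fun C hC ↦ ⟨?_, ?_⟩) ?_
  · rwa [← unitInterval.volume_apply]
  · exact ((hnull C hC).1.isCompact.image continuous_subtype_val).isClosed
  · rw [← unitInterval.volume_apply, (hnull C hC).2]
  · rw [← Set.image_sUnion]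
    exact Set.image_mono hcover

end StarProp

end RelativeStarProp

section Probability

variable {Ω : Type*} [MeasurableSpace Ω] {μ : Measure Ω}

theorem tsum_eq_top_of_eventually_le {ι : Type*} {f g : ι → ℝ≥0∞} (hf : ∀ i, f i ≠ ∞)
    (hfg : ∀ᶠ i in cofinite, f i ≤ g i) (hdiv : ∑' i, f i = ∞) : ∑' i, g i = ∞ := by
  set s : Finset ι := (eventually_cofinite.1 hfg).toFinset
  have hle : ∑' i, f i ≤ ∑' i, g i + ∑ i ∈ s, f i := by
    rw [← Finset.tsum_subtype', tsum_subtype (s : Set ι) f, ← ENNReal.tsum_add]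
    refine ENNReal.tsum_le_tsum fun i ↦ ?_
    by_cases hi : f i ≤ g i
    · exact le_add_right hi
    · exact le_add_left (Set.indicator_of_mem (by simpa [s] using hi) f).ge
  rw [hdiv, top_le_iff, ENNReal.add_eq_top] at hle
  exact hle.resolve_right (ENNReal.sum_ne_top.2 fun i _ ↦ hf i)

theorem tsum_min_measure_compl_pow_eq_top [IsProbabilityMeasure μ] {E : ℕ → Set Ω}
    (hlim : Tendsto (fun n ↦ μ (E n)) atTop (𝓝 0)) {k : ℕ} (hdiv : ∑' n, μ (E n) ^ k = ∞) :
    ∑' n, min (μ (E n)) (μ (E n)ᶜ) ^ k = ∞ := by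
  refine tsum_eq_top_of_eventually_le (fun n ↦ ENNReal.pow_ne_top (measure_ne_top μ _)) ?_ hdiv
  rw [Nat.cofinite_eq_atTop]
  filter_upwards [hlim.eventually_le_const (u := 2⁻¹) (by simp)] with n hn
  have hcompl : 2⁻¹ ≤ μ (E n)ᶜ := by
    rw [← ENNReal.one_sub_inv_two, tsub_le_iff_left]
    calc 1 ≤ μ (E n) + μ (E n)ᶜ := measure_univ (μ := μ) ▸ measure_univ_le_add_compl (E n)
      _ ≤ 2⁻¹ + μ (E n)ᶜ := by gcongr
  rw [min_eq_left (hn.trans hcompl)]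

/-- By the conditional Borel–Cantelli lemma the partial sums diverge exactly where their predictable
part does, and by independence that part is the deterministic sum of the means. -/
theorem ae_not_summable_of_iIndepFun {X : ℕ → Ω → ℝ} {R : ℝ≥0} (hX : ∀ n, Measurable (X n))
    (hind : iIndepFun X μ) (hnonneg : ∀ n ω, 0 ≤ X n ω) (hle : ∀ n ω, X n ω ≤ R)
    (hdiv : ¬ Summable fun n ↦ ∫ ω, X n ω ∂μ) : ∀ᵐ ω ∂μ, ¬ Summable fun n ↦ X n ω := by
  have := hind.isProbabilityMeasure
  have hXs (n : ℕ) : StronglyMeasurable (X n) := (hX n).stronglyMeasurable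
  have hXi (n : ℕ) : Integrable (X n) μ := .of_bound (hX n).aestronglyMeasurable R <|
    ae_of_all _ fun ω ↦ by simpa only [Real.norm_of_nonneg (hnonneg n ω)] using hle n ω
  set ℱ := Filtration.natural X hXs
  set S : ℕ → Ω → ℝ := fun n ↦ ∑ i ∈ Finset.range (n + 1), X i
  have hdiff (n : ℕ) : S (n + 1) - S n = X (n + 1) := Finset.sum_range_succ_sub_sum X
  have hdiff' (n : ℕ) (ω : Ω) : S (n + 1) ω - S n ω = X (n + 1) ω := congrFun (hdiff n) ω
  have hadapted : StronglyAdapted ℱ S := fun n ↦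
    Finset.stronglyMeasurable_sum _ fun i hi ↦
      (Filtration.stronglyAdapted_natural hXs i).mono (ℱ.mono (Finset.mem_range_succ_iff.1 hi))
  have hpredictable : ∀ᵐ ω ∂μ, ∀ n,
      predictablePart S ℱ μ n ω = ∑ i ∈ Finset.range n, ∫ ω, X (i + 1) ω ∂μ := by
    have hcond : ∀ᵐ ω ∂μ, ∀ i, (μ[X (i + 1) | ℱ i]) ω = ∫ ω, X (i + 1) ω ∂μ :=
      ae_all_iff.2 fun i ↦ hind.condExp_natural_ae_eq_of_lt hXs i.lt_succ_self
    filter_upwards [hcond] with ω hω n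
    simp only [predictablePart, Finset.sum_apply, hdiff, hω]
  have hmeans : Tendsto (fun n ↦ ∑ i ∈ Finset.range n, ∫ ω, X (i + 1) ω ∂μ) atTop atTop := by
    rw [← not_summable_iff_tendsto_nat_atTop_of_nonneg fun i ↦ integral_nonneg (hnonneg _)]
    rwa [summable_nat_add_iff 1 (f := fun n ↦ ∫ ω, X n ω ∂μ)]
  filter_upwards [hpredictable, tendsto_sum_indicator_atTop_iff (R := R)
    (ae_of_all μ fun ω n ↦ sub_nonneg.1 (hdiff' n ω ▸ hnonneg _ ω)) hadapted
    (fun n ↦ integrable_finsetSum' _ fun i _ ↦ hXi i)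
    (ae_of_all μ fun ω n ↦ by rw [hdiff', abs_of_nonneg (hnonneg _ ω)]; exact hle _ ω)]
    with ω hω hiff
  simp only [hω, hmeans, iff_true, S, Finset.sum_apply] at hiff
  rw [not_summable_iff_tendsto_nat_atTop_of_nonneg fun n ↦ hnonneg n ω]
  exact (tendsto_add_atTop_iff_nat 1).1 hiff

theorem iIndepSet_compl {ι : Type*} {s : ι → Set Ω} (hs : ∀ i, MeasurableSet (s i))
    (hind : iIndepSet s μ) : iIndepSet sᶜ μ :=
  ((iIndepSet_iff_iIndep s μ).1 hind).iIndepSets'.iIndepSet_of_mem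
    (fun i ↦ (MeasurableSpace.measurableSet_generateFrom (Set.mem_singleton (s i))).compl)
    fun i ↦ (hs i).compl

theorem ae_tsum_indicator_eq_top {s : ℕ → Set Ω} (hs : ∀ n, MeasurableSet (s n))
    (hind : iIndepSet s μ) {w : ℕ → ℝ≥0∞} {R : ℝ≥0} (hw : ∀ n, w n ≤ R)
    (hdiv : ∑' n, w n * μ (s n) = ∞) :
    ∀ᵐ ω ∂μ, ∑' n, (s n).indicator (fun _ ↦ w n) ω = ∞ := by
  have := ((iIndepSet_iff_iIndep s μ).1 hind).isProbabilityMeasure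
  lift w to ℕ → ℝ≥0 using fun n ↦ ne_top_of_le_ne_top ENNReal.coe_ne_top (hw n)
  have hwR (n : ℕ) : w n ≤ R := ENNReal.coe_le_coe.1 (hw n)
  set X : ℕ → Ω → ℝ := fun n ↦ (s n).indicator fun _ ↦ (w n : ℝ)
  have hX : iIndepFun X μ := by
    convert (hind.iIndepFun_indicator (β := ℝ)).comp (fun n t ↦ (w n : ℝ) * t)
      fun n ↦ measurable_const_mul _ using 2 with n
    ext ω
    by_cases hω : ω ∈ s n <;> simp [X, hω]
  have hmean (n : ℕ) : ∫ ω, X n ω ∂μ = (w n * μ (s n)).toReal := by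
    simp [X, integral_indicator_const _ (hs n), measureReal_def, mul_comm]
  have hdiv' : ¬ Summable fun n ↦ ∫ ω, X n ω ∂μ := fun hsum ↦ hsum.tsum_ofReal_ne_top <| by
    simpa only [hmean, ENNReal.ofReal_toReal
      (ENNReal.mul_ne_top ENNReal.coe_ne_top (measure_ne_top μ _))] using hdiv
  filter_upwards [ae_not_summable_of_iIndepFun (fun n ↦ measurable_const.indicator (hs n)) hX
    (fun n ω ↦ Set.indicator_nonneg (fun _ _ ↦ (w n).2) ω)
    (fun n ω ↦ Set.indicator_le_self' (fun _ _ ↦ (w n).2) ω |>.trans (hwR n))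
    hdiv'] with ω hω
  by_contra hfin
  refine hω ((ENNReal.summable_toReal hfin).congr fun n ↦ ?_)
  by_cases hn : ω ∈ s n <;> simp [hn]

theorem setOf_mem_ultrafilter_ae_eq {ι : Type*} [Countable ι] {E E' : ι → Set Ω}
    (h : ∀ n, E n =ᵐ[μ] E' n) (ℱ : Ultrafilter ι) :
    {x | {n | x ∈ E n} ∈ ℱ} =ᵐ[μ] {x | {n | x ∈ E' n} ∈ ℱ} := by
  refine eventuallyEq_set.2 ?_
  filter_upwards [ae_all_iff.2 fun n ↦ (h n).mem_iff] with x hx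
  simp only [hx]

end Probability

section Regularity

variable {X : Type*} [TopologicalSpace X] [MeasurableSpace X] {μ : Measure X} [IsFiniteMeasure μ]
  [μ.WeaklyRegular]

theorem exists_isClosed_subset_measure_ne_zero {S : Set X} (hS : NullMeasurableSet S μ)
    (hS₀ : μ S ≠ 0) : ∃ K ⊆ S, IsClosed K ∧ μ K ≠ 0 := by
  obtain ⟨t, htS, ht, hae⟩ := hS.exists_measurable_subset_ae_eq
  have ht₀ : 0 < μ t := by rwa [measure_congr hae, pos_iff_ne_zero]
  obtain ⟨K, hKt, hK, hK₀⟩ := ht.exists_lt_isClosed_of_ne_top (measure_ne_top μ t) ht₀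
  exact ⟨K, hKt.trans htS, hK, hK₀.ne'⟩

theorem not_nullMeasurableSet_of_forall_isClosed [NeZero μ] {S : Set X}
    (hS : ∀ K, IsClosed K → μ K ≠ 0 → (K ∩ S).Nonempty ∧ (K ∩ Sᶜ).Nonempty) :
    ¬ NullMeasurableSet S μ := by
  intro hmeas
  have hpos : μ S ≠ 0 ∨ μ Sᶜ ≠ 0 := by
    by_contra! h
    exact NeZero.ne μ (Measure.measure_univ_eq_zero.1 <|
      le_antisymm ((measure_univ_le_add_compl S).trans (by simp [h])) bot_le)
  rcases hpos with h | h
  · obtain ⟨K, hKS, hK, hK₀⟩ := exists_isClosed_subset_measure_ne_zero hmeas h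
    obtain ⟨x, hxK, hxS⟩ := (hS K hK hK₀).2
    exact hxS (hKS hxK)
  · obtain ⟨K, hKS, hK, hK₀⟩ := exists_isClosed_subset_measure_ne_zero hmeas.compl h
    obtain ⟨x, hxK, hxS⟩ := (hS K hK hK₀).1
    exact hKS hxK hxS

theorem exists_isClosed_subset_forall_inter_eq_isOpen_inter {ι : Type*} [Countable ι]
    [OpensMeasurableSpace X] {T : ι → Set X} (hT : ∀ i, MeasurableSet (T i)) {K : Set X}
    (hK : MeasurableSet K) (hK₀ : μ K ≠ 0) :
    ∃ L ⊆ K, IsClosed L ∧ μ L ≠ 0 ∧ ∀ i, ∃ U, IsOpen U ∧ L ∩ T i = L ∩ U := by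
  obtain ⟨ε, hε, hεK⟩ := ENNReal.exists_pos_sum_of_countable' hK₀ ι
  choose U hTU hU _ hUε using fun i ↦
    (hT i).exists_isOpen_sdiff_lt (measure_ne_top μ _) (hε i).ne'
  have hexc : μ (⋃ i, U i \ T i) < μ K :=
    ((measure_iUnion_le _).trans (ENNReal.tsum_le_tsum fun i ↦ (hUε i).le)).trans_lt hεK
  have hgood : MeasurableSet (K \ ⋃ i, U i \ T i) :=
    hK.diff (.iUnion fun i ↦ (hU i).measurableSet.diff (hT i))
  have hgood₀ : μ (K \ ⋃ i, U i \ T i) ≠ 0 :=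
    ((tsub_pos_of_lt hexc).trans_le le_measure_sdiff).ne'
  obtain ⟨L, hLK, hL, hL₀⟩ :=
    exists_isClosed_subset_measure_ne_zero hgood.nullMeasurableSet hgood₀
  refine ⟨L, hLK.trans Set.sdiff_subset, hL, hL₀, fun i ↦ ⟨U i, hU i, ?_⟩⟩
  refine (Set.inter_subset_inter_right L (hTU i)).antisymm fun x hx ↦ ⟨hx.1, ?_⟩
  by_contra hxT
  exact (hLK hx.1).2 (Set.mem_iUnion.2 ⟨i, hx.2, hxT⟩)

end Regularity

section Selection

theorem mk_finset_lt {α : Type u} {κ : Cardinal.{u}} (hκ : ℵ₀ ≤ κ) (hα : #α < κ) :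
    #(Finset α) < κ := by
  cases finite_or_infinite α
  · exact (Cardinal.lt_aleph0_of_finite _).trans_le hκ
  · rwa [Cardinal.mk_finset_of_infinite]

theorem mk_isClosed_le_continuum (X : Type u) [TopologicalSpace X] [SecondCountableTopology X] :
    #{K : Set X // IsClosed K} ≤ 𝔠 := by
  borelize X
  have hcard := MeasurableSpace.cardinal_measurableSet_le_continuum
    ((TopologicalSpace.countable_countableBasis X).le_aleph0.trans Cardinal.aleph0_le_continuum)
  rw [← (TopologicalSpace.isBasis_countableBasis X).borel_eq_generateFrom] at hcard
  exact (Cardinal.mk_subtype_mono fun K hK ↦ hK.measurableSet).trans hcard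

/-- Choose `x i` by recursion along a well-order of `ι` of minimal type, so that fewer than `κ`
finite intersections have to be respected at each stage. -/
theorem exists_forall_finset_biInter {ι X : Type u} {α : Type*} {κ : Cardinal.{u}} (hκ : ℵ₀ ≤ κ)
    (hι : #ι ≤ κ) {P : Set α → Prop} (huniv : P Set.univ) {K : ι → Set X} {S : ι → X → Set α}
    (hstep : ∀ (i : ι) (J : Type u) (A : J → Set α), #J < κ → (∀ j, P (A j)) →
      ∃ z ∈ K i, ∀ j, P (A j ∩ S i z)) :
    ∃ x : ι → X, (∀ i, x i ∈ K i) ∧ ∀ F : Finset ι, P (⋂ i ∈ F, S i (x i)) := by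
  classical
  obtain ⟨_, _, hord⟩ := Cardinal.exists_ord_eq_type_lt ι
  have hnext (i : ι) (x : ∀ j, j < i → X) : ∃ z ∈ K i, ∀ F : Finset (Set.Iio i),
      P (⋂ j ∈ F, S j (x j j.2)) → P ((⋂ j ∈ F, S j (x j j.2)) ∩ S i z) := by
    have hcard : #{F : Finset (Set.Iio i) // P (⋂ j ∈ F, S j (x j j.2))} < κ :=
      (Cardinal.mk_subtype_le _).trans_lt
        (mk_finset_lt hκ ((Cardinal.mk_Iio_lt i hord).trans_le hι))
    obtain ⟨z, hzK, hz⟩ := hstep i _ _ hcard Subtype.prop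
    exact ⟨z, hzK, fun F hF ↦ hz ⟨F, hF⟩⟩
  choose next hnextK hnextP using hnext
  let x : ι → X := wellFounded_lt.fix next
  have hx (i : ι) : x i = next i fun j _ ↦ x j := wellFounded_lt.fix_eq next i
  refine ⟨x, fun i ↦ hx i ▸ hnextK i _, fun F ↦ ?_⟩
  induction F using Finset.induction_on_max with
  | empty => simpa using huniv
  | insert a s hlt ih =>
    have hinter : ⋂ j ∈ s.subtype (· ∈ Set.Iio a), S j (x j) = ⋂ j ∈ s, S j (x j) := by
      ext n
      simpa using ⟨fun h j hj ↦ h j (hlt j hj) hj, fun h j _ hj ↦ h j hj⟩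
    have hPa := hnextP a (fun j _ ↦ x j) (s.subtype (· ∈ Set.Iio a))
    rw [← hx, hinter] at hPa
    simpa only [Finset.set_biInter_insert, Set.inter_comm] using hPa ih

theorem exists_ultrafilter_forall_mem {ι α : Type*} {S : ι → Set α}
    (hS : ∀ F : Finset ι, (⋂ i ∈ F, S i).Nonempty) : ∃ ℱ : Ultrafilter α, ∀ i, S i ∈ ℱ := by
  classical
  obtain ⟨ℱ, hℱ⟩ := Ultrafilter.exists_ultrafilter_of_finite_inter_nonempty (Set.range S) <| by
    intro T hT
    obtain ⟨F, -, rfl⟩ := Finset.subset_set_image_iff.1 (Set.image_univ (f := S) ▸ hT)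
    simpa using hS F
  exact ⟨ℱ, fun i ↦ hℱ (Set.mem_range_self i)⟩

end Selection

section Large

theorem indicator_inter_setOf_mem {α X M : Type*} [Zero M] (A : Set α) (T : α → Set X) (v : α → M)
    (x : X) (n : α) :
    (A ∩ {n | x ∈ T n}).indicator v n = (T n).indicator (fun _ ↦ A.indicator v n) x := by
  rw [Set.inter_comm, ← Set.indicator_indicator]
  rfl

/-- `A` is large for the weights `w` if `∑ n ∈ A, w n ^ k` diverges for every `k ≥ 1`. Asking for
all powers at once makes largeness survive the intersection with a random set of indices that
contains `n` with probability at least `w n`. -/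
def IsLarge {α : Type*} (w : α → ℝ≥0∞) (A : Set α) : Prop :=
  ∀ k : ℕ, 1 ≤ k → ∑' n, A.indicator (w ^ k) n = ∞

namespace IsLarge

theorem nonempty {α : Type*} {w : α → ℝ≥0∞} {A : Set α} (hA : IsLarge w A) : A.Nonempty := by
  rw [Set.nonempty_iff_ne_empty]
  rintro rfl
  simpa using hA 1 le_rfl

theorem ae_inter {Ω : Type*} [MeasurableSpace Ω] {μ : Measure Ω} {w : ℕ → ℝ≥0∞} {A : Set ℕ}
    (hA : IsLarge w A) {T : ℕ → Set Ω} (hT : ∀ n, MeasurableSet (T n)) (hind : iIndepSet T μ)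
    (hw : ∀ n, w n ≤ μ (T n)) : ∀ᵐ ω ∂μ, IsLarge w (A ∩ {n | ω ∈ T n}) := by
  have := ((iIndepSet_iff_iIndep T μ).1 hind).isProbabilityMeasure
  refine ae_all_iff.2 fun k ↦ eventually_imp_distrib_left.2 fun _ ↦ ?_
  have hle (n : ℕ) : A.indicator (w ^ k) n ≤ (1 : ℝ≥0) :=
    Set.indicator_apply_le' (fun _ ↦ pow_le_one₀ bot_le ((hw n).trans prob_le_one))
      fun _ ↦ zero_le_one
  have hdiv : ∑' n, A.indicator (w ^ k) n * μ (T n) = ∞ := by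
    refine top_unique ((hA (k + 1) le_add_self).ge.trans (ENNReal.tsum_le_tsum fun n ↦ ?_))
    calc A.indicator (w ^ (k + 1)) n = A.indicator (w ^ k) n * w n := by
          rw [pow_succ]
          exact Set.indicator_mul_left A (w ^ k) w
      _ ≤ A.indicator (w ^ k) n * μ (T n) := by gcongr; exact hw n
  filter_upwards [ae_tsum_indicator_eq_top hT hind hle hdiv] with ω hω
  simpa only [indicator_inter_setOf_mem] using hω

end IsLarge

variable {X : Type u} [TopologicalSpace X]

theorem isClosed_setOf_tsum_indicator_le {α : Type*} {T : α → Set X} {L : Set X} (hL : IsClosed L)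
    (hT : ∀ n, ∃ U, IsOpen U ∧ L ∩ T n = L ∩ U) (A : Set α) (v : α → ℝ≥0∞) (M : ℝ≥0∞) :
    IsClosed {x ∈ L | ∑' n, (A ∩ {n | x ∈ T n}).indicator v n ≤ M} := by
  choose U hU hTU using hT
  have hsemi : LowerSemicontinuous fun x ↦ ∑' n, (U n).indicator (fun _ ↦ A.indicator v n) x :=
    lowerSemicontinuous_tsum fun n ↦ (hU n).lowerSemicontinuous_indicator bot_le
  convert hL.inter (hsemi.isClosed_preimage M) using 1
  refine Set.ext fun x ↦ and_congr_right fun hxL ↦ ?_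
  have hmem (n : α) : x ∈ T n ↔ x ∈ U n := by
    simpa [hxL] using Set.ext_iff.1 (hTU n) x
  simp only [hmem, indicator_inter_setOf_mem, Set.mem_preimage, Set.mem_Iic]

variable [MeasurableSpace X] [OpensMeasurableSpace X] {μ : Measure X} [μ.WeaklyRegular]

theorem RelativeStarProp.exists_forall_isLarge_inter (hμ : RelativeStarProp μ)
    {w : ℕ → ℝ≥0∞} {T : ℕ → Set X} (hT : ∀ n, MeasurableSet (T n))
    (hind : iIndepSet T μ) (hw : ∀ n, w n ≤ μ (T n)) {K : Set X} (hK : IsClosed K)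
    (hK₀ : μ K ≠ 0) {J : Type u} (hJ : #J < 𝔠) {A : J → Set ℕ} (hA : ∀ j, IsLarge w (A j)) :
    ∃ z ∈ K, ∀ j, IsLarge w (A j ∩ {n | z ∈ T n}) := by
  have := ((iIndepSet_iff_iIndep T μ).1 hind).isProbabilityMeasure
  obtain ⟨L, hLK, hL, hL₀, hLT⟩ :=
    exists_isClosed_subset_forall_inter_eq_isOpen_inter hT hK.measurableSet hK₀
  let bad (q : J × {k : ℕ // 1 ≤ k} × ℕ) : Set X :=
    {x ∈ L | ∑' n, (A q.1 ∩ {n | x ∈ T n}).indicator (w ^ (q.2.1 : ℕ)) n ≤ q.2.2}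
  have hbad₀ (q) : μ (bad q) = 0 := by
    refine measure_eq_zero_iff_ae_notMem.2 ?_
    filter_upwards [(hA q.1).ae_inter hT hind hw] with x hlarge hx
    exact ENNReal.natCast_ne_top q.2.2 (top_unique (hlarge q.2.1 q.2.1.2 ▸ hx.2))
  have hcard : #(J × {k : ℕ // 1 ≤ k} × ℕ) < 𝔠 := by
    rw [Cardinal.mk_prod, Cardinal.lift_uzero]
    refine Cardinal.mul_lt_of_lt Cardinal.aleph0_le_continuum hJ ?_
    simpa using Cardinal.aleph0_lt_continuum
  obtain ⟨z, hzL, hz⟩ := hμ.exists_forall_notMem hL hL₀ hcard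
    (fun q ↦ isClosed_setOf_tsum_indicator_le hL hLT _ _ _) hbad₀
  refine ⟨z, hLK hzL, fun j k hk ↦ ?_⟩
  by_contra hfin
  obtain ⟨M, hM⟩ := ENNReal.exists_nat_gt hfin
  exact hz (j, ⟨k, hk⟩, M) ⟨hzL, hM.le⟩

variable [SecondCountableTopology X]

theorem RelativeStarProp.exists_ultrafilter_forall_isClosed (hμ : RelativeStarProp μ)
    {w : ℕ → ℝ≥0∞} (hw : IsLarge w Set.univ)
    {𝒯 : Set (ℕ → Set X)} (h𝒯 : #𝒯 ≤ 𝔠) (hmeas : ∀ T ∈ 𝒯, ∀ n, MeasurableSet (T n))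
    (hind : ∀ T ∈ 𝒯, iIndepSet T μ) (hle : ∀ T ∈ 𝒯, ∀ n, w n ≤ μ (T n)) :
    ∃ ℱ : Ultrafilter ℕ, ∀ T ∈ 𝒯, ∀ K, IsClosed K → μ K ≠ 0 → ∃ x ∈ K, {n | x ∈ T n} ∈ ℱ := by
  let ι := {K : Set X // IsClosed K ∧ μ K ≠ 0} × 𝒯
  have hι : #ι ≤ 𝔠 := by
    rw [Cardinal.mk_prod, Cardinal.lift_id, Cardinal.lift_id]
    exact Cardinal.mul_le_of_le Cardinal.aleph0_le_continuum
      ((Cardinal.mk_subtype_mono fun _ hK ↦ hK.1).trans (mk_isClosed_le_continuum X)) h𝒯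
  obtain ⟨x, hxK, hx⟩ := exists_forall_finset_biInter (K := fun i : ι ↦ i.1.1)
    (S := fun i z ↦ {n | z ∈ i.2.1 n}) Cardinal.aleph0_le_continuum hι hw fun i J A hJ hA ↦
      hμ.exists_forall_isLarge_inter (hmeas _ i.2.2) (hind _ i.2.2) (hle _ i.2.2) i.1.2.1 i.1.2.2
        hJ hA
  obtain ⟨ℱ, hℱ⟩ := exists_ultrafilter_forall_mem fun F ↦ (hx F).nonempty
  refine ⟨ℱ, fun T hT K hK hK₀ ↦ ?_⟩
  let i : ι := (⟨K, hK, hK₀⟩, ⟨T, hT⟩)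
  exact ⟨x i, hxK i, hℱ i⟩

theorem RelativeStarProp.exists_ultrafilter_not_nullMeasurableSet (hμ : RelativeStarProp μ)
    {E : ℕ → Set X} (hE : ∀ n, MeasurableSet (E n))
    (hind : iIndepSet E μ) (hlarge : IsLarge (fun n ↦ min (μ (E n)) (μ (E n)ᶜ)) Set.univ) :
    ∃ ℱ : Ultrafilter ℕ, ¬ NullMeasurableSet {x | {n | x ∈ E n} ∈ ℱ} μ := by
  have := ((iIndepSet_iff_iIndep E μ).1 hind).isProbabilityMeasure
  have hpair {p : (ℕ → Set X) → Prop} (h : p E) (h' : p Eᶜ) : ∀ T ∈ ({E, Eᶜ} : Set _), p T := by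
    simp [h, h']
  obtain ⟨ℱ, hℱ⟩ := hμ.exists_ultrafilter_forall_isClosed hlarge
    ((Set.toFinite {E, Eᶜ}).lt_aleph0.le.trans Cardinal.aleph0_le_continuum)
    (hpair hE fun n ↦ (hE n).compl) (hpair hind (iIndepSet_compl hE hind))
    (hpair (fun n ↦ min_le_left _ _) fun n ↦ min_le_right _ _)
  refine ⟨ℱ, not_nullMeasurableSet_of_forall_isClosed fun K hK hK₀ ↦ ⟨?_, ?_⟩⟩
  · exact hℱ E (.inl rfl) K hK hK₀
  · obtain ⟨x, hxK, hx⟩ := hℱ Eᶜ (.inr rfl) K hK hK₀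
    exact ⟨x, hxK, Ultrafilter.compl_mem_iff_notMem.1 hx⟩

end Large

theorem stmt_17_general {X : Type u} [TopologicalSpace X] [SecondCountableTopology X]
    [MeasurableSpace X] [OpensMeasurableSpace X] {μ : Measure X} [μ.WeaklyRegular]
    (hμ : RelativeStarProp μ) (E : ℕ → Set X)
    (hmeas : ∀ n, NullMeasurableSet (E n) μ)
    (hind : ∀ F : Finset ℕ, μ (⋂ n ∈ F, E n) = ∏ n ∈ F, μ (E n))
    (hdiv : ∀ k : ℕ, 1 ≤ k → ∑' n, min (μ (E n)) (μ (E n)ᶜ) ^ k = ∞) :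
    ∃ ℱ : Ultrafilter ℕ, ¬ NullMeasurableSet {x | {n | x ∈ E n} ∈ ℱ} μ := by
  set E' : ℕ → Set X := fun n ↦ toMeasurable μ (E n)
  have hE' (n : ℕ) : MeasurableSet (E' n) := measurableSet_toMeasurable μ (E n)
  have hae (n : ℕ) : E' n =ᵐ[μ] E n := (hmeas n).toMeasurable_ae_eq
  have hind' : iIndepSet E' μ := by
    refine (iIndepSet_iff_meas_biInter hE').2 fun F ↦ ?_
    simp only [measure_congr (hae _), ← hind]
    exact measure_congr (Filter.EventuallyEq.countable_bInter F.countable_toSet fun n _ ↦ hae n)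
  have hlarge : IsLarge (fun n ↦ min (μ (E' n)) (μ (E' n)ᶜ)) Set.univ := fun k hk ↦ by
    simpa [measure_congr (hae _), measure_congr (hae _).compl] using hdiv k hk
  obtain ⟨ℱ, hℱ⟩ := hμ.exists_ultrafilter_not_nullMeasurableSet hE' hind' hlarge
  exact ⟨ℱ, fun h ↦ hℱ (h.congr (setOf_mem_ultrafilter_ae_eq hae ℱ).symm)⟩

/-- **Theorem 2E(e).**  Assume `(*)`.  Let `⟨E_n⟩` be a stochastically independent sequence of
Lebesgue measurable subsets of `[0,1]` with `lim_n μ_L E_n = 0` but `∑_n (μ_L E_n)^k = ∞` for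
every `k ≥ 1`.  Then there is an ultrafilter `ℱ` on `ℕ` such that
`lim_{n→ℱ} E_n = { x : {n : x ∈ E_n} ∈ ℱ }` is not Lebesgue measurable. -/
theorem stmt_17 (hstar : StarProp) (E : ℕ → Set I)
    (hmeas : ∀ n, NullMeasurableSet (E n) (volume : Measure I))
    (hind : ∀ F : Finset ℕ,
      (volume : Measure I) (⋂ n ∈ F, E n) = ∏ n ∈ F, (volume : Measure I) (E n))
    (hlim : Tendsto (fun n => (volume : Measure I) (E n)) atTop (nhds 0))
    (hdiv : ∀ k : ℕ, 1 ≤ k → ∑' n, ((volume : Measure I) (E n)) ^ k = ∞) :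
    ∃ ℱ : Ultrafilter ℕ,
      ¬ NullMeasurableSet {x : I | {n | x ∈ E n} ∈ ℱ} (volume : Measure I) := by
  exact stmt_17_general hstar.relativeStarProp_unitInterval E hmeas hind fun k hk ↦
    tsum_min_measure_compl_pow_eq_top hlim (hdiv k hk)
end
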